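/- arXiv:1704.04690 — 2 statements merged into one kernel-verified Lean document; each statement's English description precedes it below -/
import Mathlib

section
/- Let β ∈ [0, 1/2]. In ℂ⁴ with standard orthonormal basis m₀, m₁, m₂, m₃ define the unit vectors E01z = (√(1−(3/2)β)·m₀ + √(β/2)·m₃)/√(1−β), E00z = (m₁ − i·m₂)/√2, E01x = (√(1−(3/2)β)·m₀ + √(β/2)·m₁)/√(1−β), E00x = (i·m₂ + m₃)/√2, and the density matrices ζ₀ = (1−β)|E01z⟩⟨E01z| + β|E00z⟩⟨E00z| and ζ₁ = (1−β)|E01x⟩⟨E01x| + β|E00x⟩⟨E00x|. Then the supremum over all binary POVMs (M₀, M₁) on ℂ⁴ of ½(tr(M₀ζ₀) + tr(M₁ζ₁)) equals ½(1 + √(β(1−(3/2)β)) + β/√2). -/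
open Matrix ComplexOrder

/-- Rank-one outer product `|v⟩⟨v|`. -/
noncomputable def outerProd (v : Fin 4 → ℂ) : Matrix (Fin 4) (Fin 4) ℂ :=
  Matrix.of fun i j => v i * (starRingEnd ℂ) (v j)

noncomputable def E01z (β : ℝ) : Fin 4 → ℂ :=
  ![((Real.sqrt (1 - 3/2*β) / Real.sqrt (1 - β) : ℝ) : ℂ), 0, 0,
    ((Real.sqrt (β/2) / Real.sqrt (1 - β) : ℝ) : ℂ)]

noncomputable def E00z : Fin 4 → ℂ :=
  ![0, (Real.sqrt 2 : ℂ)⁻¹, -Complex.I * (Real.sqrt 2 : ℂ)⁻¹, 0]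

noncomputable def E01x (β : ℝ) : Fin 4 → ℂ :=
  ![((Real.sqrt (1 - 3/2*β) / Real.sqrt (1 - β) : ℝ) : ℂ),
    ((Real.sqrt (β/2) / Real.sqrt (1 - β) : ℝ) : ℂ), 0, 0]

noncomputable def E00x : Fin 4 → ℂ :=
  ![0, 0, Complex.I * (Real.sqrt 2 : ℂ)⁻¹, (Real.sqrt 2 : ℂ)⁻¹]

/-- Eve's ancilla state for basis `z` (`B = 0`). -/
noncomputable def zeta0 (β : ℝ) : Matrix (Fin 4) (Fin 4) ℂ :=
  ((1 - β : ℝ) : ℂ) • outerProd (E01z β) + ((β : ℝ) : ℂ) • outerProd E00z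

/-- Eve's ancilla state for basis `x` (`B = 1`). -/
noncomputable def zeta1 (β : ℝ) : Matrix (Fin 4) (Fin 4) ℂ :=
  ((1 - β : ℝ) : ℂ) • outerProd (E01x β) + ((β : ℝ) : ℂ) • outerProd E00x

lemma conj2 : (starRingEnd ℂ) 2 = 2 := by
  exact Complex.conj_ofNat 2

noncomputable def vp (r : ℝ) : Fin 4 → ℂ := ![(r:ℂ), -1/2, 0, 1/2]
noncomputable def vp' (r : ℝ) : Fin 4 → ℂ := ![(r:ℂ), 1/2, 0, -1/2]
noncomputable def vq (r : ℝ) : Fin 4 → ℂ := ![0, -1/2, Complex.I * (r:ℂ), -1/2]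
noncomputable def vq' (r : ℝ) : Fin 4 → ℂ := ![0, 1/2, Complex.I * (r:ℂ), 1/2]

lemma outerProd_psd (v : Fin 4 → ℂ) : (outerProd v).PosSemidef :=
  Matrix.posSemidef_vecMulVec_self_star v

lemma trace_outer (M : Matrix (Fin 4) (Fin 4) ℂ) (v : Fin 4 → ℂ) :
    (M * outerProd v).trace = star v ⬝ᵥ (M *ᵥ v) := by
  have : outerProd v = Matrix.vecMulVec v (star v) := rfl
  rw [this, Matrix.mul_vecMulVec, Matrix.trace_vecMulVec, dotProduct_comm]

lemma trace_outer_nonneg (M : Matrix (Fin 4) (Fin 4) ℂ) (h : M.PosSemidef) (v : Fin 4 → ℂ) :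
    0 ≤ (M * outerProd v).trace.re := by
  rw [trace_outer]
  exact (Complex.le_def.1 (h.dotProduct_mulVec_nonneg v)).1

lemma resolution (r : ℝ) (hr : r * r = 1/2) :
    (outerProd (vp r) + outerProd (vq r)) + (outerProd (vp' r) + outerProd (vq' r)) = 1 := by
  have hr' : (r:ℂ) * r = 1/2 := by have h := congrArg (fun x : ℝ => (x:ℂ)) hr; push_cast at h; exact h
  have hI := Complex.I_mul_I
  ext i j
  fin_cases i <;> fin_cases j <;> simp [conj2, outerProd, vp, vp', vq, vq', Matrix.one_apply] <;> grind

lemma delta (β : ℝ) (r x y s : ℝ) (hx : E01z β = ![(x:ℂ), 0, 0, (y:ℂ)])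
    (hx' : E01x β = ![(x:ℂ), (y:ℂ), 0, 0]) (hrs : (Real.sqrt 2)⁻¹ = r)
    (hr : r * r = 1/2) (hy : (1-β)*(y*y) = β/2) (hxy : (1-β)*(x*y) = s*r) :
    zeta0 β = zeta1 β + ((s:ℂ) • (outerProd (vp r) - outerProd (vp' r)) +
      ((β*r : ℝ):ℂ) • (outerProd (vq r) - outerProd (vq' r))) := by
  have hr' : (r:ℂ) * r = 1/2 := by have h := congrArg (fun x : ℝ => (x:ℂ)) hr; push_cast at h; exact h
  have hy' : (1-(β:ℂ)) * (y * y) = β/2 := by have h := congrArg (fun x : ℝ => (x:ℂ)) hy; push_cast at h; exact h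
  have hxy' : (1-(β:ℂ)) * (x * y) = s*r := by have h := congrArg (fun x : ℝ => (x:ℂ)) hxy; push_cast at h; exact h
  have hrs' : ((Real.sqrt 2 : ℝ) : ℂ)⁻¹ = r := by rw [← hrs]; push_cast; rfl
  have hI := Complex.I_mul_I
  ext i j
  fin_cases i <;> fin_cases j <;>
    simp [conj2, zeta0, zeta1, outerProd, hx, hx', E00z, E00x, hrs', vp, vp', vq, vq'] <;> grind

lemma tr_zeta1 (β : ℝ) (r x y : ℝ)
    (hx' : E01x β = ![(x:ℂ), (y:ℂ), 0, 0]) (hrs : (Real.sqrt 2)⁻¹ = r)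
    (hr : r * r = 1/2) (hx : (1-β)*(x*x) = 1-3/2*β) (hy : (1-β)*(y*y) = β/2) :
    (zeta1 β).trace = 1 := by
  have hr' : (r:ℂ) * r = 1/2 := by have h := congrArg (fun x : ℝ => (x:ℂ)) hr; push_cast at h; exact h
  have hy' : (1-(β:ℂ)) * (y * y) = β/2 := by have h := congrArg (fun x : ℝ => (x:ℂ)) hy; push_cast at h; exact h
  have hx'' : (1-(β:ℂ)) * (x * x) = 1-3/2*β := by have h := congrArg (fun x : ℝ => (x:ℂ)) hx; push_cast at h; exact h
  have hrs' : ((Real.sqrt 2 : ℝ) : ℂ)⁻¹ = r := by rw [← hrs]; push_cast; rfl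
  have hI := Complex.I_mul_I
  simp [conj2, Matrix.trace, Fin.sum_univ_four, zeta1, outerProd, hx', E00x, hrs']
  grind

lemma tr_opt (r : ℝ) (hr : r * r = 1/2) :
    ((outerProd (vp r) + outerProd (vq r)) * outerProd (vp r)).trace = 1 ∧
    ((outerProd (vp r) + outerProd (vq r)) * outerProd (vq r)).trace = 1 ∧
    ((outerProd (vp r) + outerProd (vq r)) * outerProd (vp' r)).trace = 0 ∧
    ((outerProd (vp r) + outerProd (vq r)) * outerProd (vq' r)).trace = 0 := by
  have hr' : (r:ℂ) * r = 1/2 := by have h := congrArg (fun x : ℝ => (x:ℂ)) hr; push_cast at h; exact h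
  have hI := Complex.I_mul_I
  refine ⟨?_, ?_, ?_, ?_⟩ <;>
    rw [trace_outer] <;> simp [conj2, dotProduct, mulVec, Fin.sum_univ_four, outerProd, vp, vp', vq, vq'] <;>
    grind

lemma tr_split (M₀ M₁ Z0 Z1 A A' B B' : Matrix (Fin 4) (Fin 4) ℂ) (s t : ℝ) (h : M₀ + M₁ = 1)
    (hZ : Z0 = Z1 + ((s:ℂ) • (A - A') + (t:ℂ) • (B - B'))) (ht : Z1.trace = 1) :
    (M₀ * Z0).trace.re + (M₁ * Z1).trace.re =
      1 + s * ((M₀ * A).trace.re - (M₀ * A').trace.re)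
        + t * ((M₀ * B).trace.re - (M₀ * B').trace.re) := by
  have h1 : (M₀ * Z1).trace + (M₁ * Z1).trace = 1 := by
    rw [← Matrix.trace_add, ← Matrix.add_mul, h, Matrix.one_mul, ht]
  have h2 := congrArg Complex.re h1
  simp at h2
  subst hZ
  simp [Matrix.mul_add, Matrix.mul_sub]
  linarith

/-- **Attack K2 on 4-state encoding, min-entropy.** The optimal probability of
guessing the uniformly random basis `B ∈ {z,x}` from `ζ_B` equals
`(1 + √(β(1-(3/2)β)) + β/√2)/2`. -/
theorem stmt5 (β : ℝ) (hβ : β ∈ Set.Icc (0:ℝ) (1/2)) :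
    sSup {g : ℝ | ∃ M₀ M₁ : Matrix (Fin 4) (Fin 4) ℂ,
        M₀.PosSemidef ∧ M₁.PosSemidef ∧ M₀ + M₁ = 1 ∧
        g = ((M₀ * zeta0 β).trace.re + (M₁ * zeta1 β).trace.re) / 2} =
      (1 + Real.sqrt (β * (1 - 3/2*β)) + β / Real.sqrt 2) / 2 := by
  obtain ⟨h0, h1⟩ := hβ
  have hc : 0 < 1 - β := by linarith
  have ha : 0 ≤ 1 - 3/2*β := by linarith
  have hb : 0 ≤ β/2 := by linarith
  have hcc := Real.mul_self_sqrt hc.le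
  have hc0 : Real.sqrt (1-β) ≠ 0 := (Real.sqrt_pos.2 hc).ne'
  obtain ⟨x, hx⟩ : ∃ x, x = Real.sqrt (1 - 3/2*β) / Real.sqrt (1 - β) := ⟨_, rfl⟩
  obtain ⟨y, hy⟩ : ∃ y, y = Real.sqrt (β/2) / Real.sqrt (1 - β) := ⟨_, rfl⟩
  obtain ⟨r, hr⟩ : ∃ r, (Real.sqrt 2)⁻¹ = r := ⟨_, rfl⟩
  obtain ⟨s, hs⟩ : ∃ s, s = Real.sqrt (β * (1 - 3/2*β)) := ⟨_, rfl⟩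
  have key : ∀ u v : ℝ, (1-β) * ((u / Real.sqrt (1-β)) * (v / Real.sqrt (1-β))) = u * v := by
    intro u v
    nth_rewrite 1 [← hcc]
    field_simp
  have hr0 : 0 ≤ r := by rw [← hr]; positivity
  have hs0 : 0 ≤ s := by rw [hs]; positivity
  have hrr : r * r = 1/2 := by
    rw [← hr, ← mul_inv, Real.mul_self_sqrt (by norm_num)]; norm_num
  have hxx : (1-β)*(x*x) = 1-3/2*β := by rw [hx, key, Real.mul_self_sqrt ha]
  have hyy : (1-β)*(y*y) = β/2 := by rw [hy, key, Real.mul_self_sqrt hb]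
  have hxy : (1-β)*(x*y) = s*r := by
    rw [hx, hy, key, hs, ← hr, Real.sqrt_mul h0, Real.sqrt_div h0]
    ring
  have hEz : E01z β = ![(x:ℂ), 0, 0, (y:ℂ)] := by rw [hx, hy]; rfl
  have hEx : E01x β = ![(x:ℂ), (y:ℂ), 0, 0] := by rw [hx, hy]; rfl
  have hD := delta β r x y s hEz hEx hr hrr hyy hxy
  have hT := tr_zeta1 β r x y hEx hr hrr hxx hyy
  rw [← hs, div_eq_mul_inv β, hr]
  have ht0 : 0 ≤ β * r := mul_nonneg h0 hr0
  obtain ⟨o1, o2, o3, o4⟩ := tr_opt r hrr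
  have hres := resolution r hrr
  apply IsGreatest.csSup_eq
  constructor
  · refine ⟨_, _, (outerProd_psd _).add (outerProd_psd _), (outerProd_psd _).add (outerProd_psd _),
      hres, ?_⟩
    rw [tr_split _ _ _ _ _ _ _ _ s (β*r) hres hD hT, o1, o2, o3, o4]
    simp
  · rintro g ⟨M₀, M₁, hM0, hM1, hM, rfl⟩
    rw [tr_split _ _ _ _ _ _ _ _ s (β*r) hM hD hT]
    have bound : ∀ v, (outerProd v).trace = 1 → (M₀ * outerProd v).trace.re ≤ 1 := by
      intro v hv
      have h1 : (M₀ * outerProd v).trace + (M₁ * outerProd v).trace = 1 := by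
        rw [← Matrix.trace_add, ← Matrix.add_mul, hM, Matrix.one_mul, hv]
      have h2 := congrArg Complex.re h1
      simp at h2
      have := trace_outer_nonneg M₁ hM1 v
      linarith
    have hrr' : (r:ℂ) * r = 1/2 := by have h := congrArg (fun x : ℝ => (x:ℂ)) hrr; push_cast at h; exact h
    have hI := Complex.I_mul_I
    have b1 := bound (vp r) (by
      simp [conj2, Matrix.trace, Fin.sum_univ_four, outerProd, vp]; grind)
    have b2 := bound (vq r) (by
      simp [conj2, Matrix.trace, Fin.sum_univ_four, outerProd, vq]; grind)
    have n1 := trace_outer_nonneg M₀ hM0 (vp' r)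
    have n2 := trace_outer_nonneg M₀ hM0 (vq' r)
    have := mul_le_mul_of_nonneg_left (sub_le_sub b1 n1) hs0
    have := mul_le_mul_of_nonneg_left (sub_le_sub b2 n2) ht0
    linarith
end

section
/- In ℂ² let ω₁ = ½(I + σ_x), ω₂ = ½(I + σ_y), ω₃ = ½(I + σ_z), and let M_b = (1/3)(I + n_b·σ) for b ∈ {1,2,3} with n₁ = (−2,1,1)/√6, n₂ = (1,−2,1)/√6, n₃ = (1,1,−2)/√6 (where n·σ = n_x σ_x + n_y σ_y + n_z σ_z). Then (M₁, M₂, M₃) is a POVM on ℂ², with tr(M_b ω_b) = 1/3 − 2/(3√6) and tr(M_m ω_b) = 1/3 + 1/(3√6) for m ≠ b, and the conditional Shannon entropy of the uniformly distributed basis B ∈ {1,2,3} given the measurement outcome equals h({1/3 + 1/(3√6), 1/3 + 1/(3√6), 1/3 − 2/(3√6)}) = −2·(1/3 + 1/(3√6))·log₂(1/3 + 1/(3√6)) − (1/3 − 2/(3√6))·log₂(1/3 − 2/(3√6)). -/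
open Matrix ComplexOrder

/-- Conditional Shannon entropy of a joint distribution `P(b,m)`,
with the convention `0·log 0 = 0`. -/
noncomputable def condEnt {B M : Type*} [Fintype B] [Fintype M] (P : B → M → ℝ) : ℝ :=
  ∑ m : M, (∑ b : B, P b m) *
    ∑ b : B, (P b m / ∑ b' : B, P b' m) * Real.logb 2 (1 / (P b m / ∑ b' : B, P b' m))

def pauliX : Matrix (Fin 2) (Fin 2) ℂ := !![0, 1; 1, 0]
def pauliY : Matrix (Fin 2) (Fin 2) ℂ := !![0, -Complex.I; Complex.I, 0]
def pauliZ : Matrix (Fin 2) (Fin 2) ℂ := !![1, 0; 0, -1]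

/-- `n·σ = n_x σ_x + n_y σ_y + n_z σ_z` for a real vector `n`. -/
noncomputable def pauliVec (a b c : ℝ) : Matrix (Fin 2) (Fin 2) ℂ :=
  (a : ℂ) • pauliX + (b : ℂ) • pauliY + (c : ℂ) • pauliZ

/-- The spin states `ω₁ = (I+σ_x)/2`, `ω₂ = (I+σ_y)/2`, `ω₃ = (I+σ_z)/2`. -/
noncomputable def omega6 : Fin 3 → Matrix (Fin 2) (Fin 2) ℂ :=
  ![(1/2 : ℂ) • (1 + pauliX), (1/2 : ℂ) • (1 + pauliY), (1/2 : ℂ) • (1 + pauliZ)]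

/-- The Shannon-optimal POVM `M_b = (I + n_b·σ)/3` with
`n₁ = (-2,1,1)/√6`, `n₂ = (1,-2,1)/√6`, `n₃ = (1,1,-2)/√6`. -/
noncomputable def Mpovm6 : Fin 3 → Matrix (Fin 2) (Fin 2) ℂ :=
  ![(1/3 : ℂ) • (1 + pauliVec (-2/Real.sqrt 6) (1/Real.sqrt 6) (1/Real.sqrt 6)),
    (1/3 : ℂ) • (1 + pauliVec (1/Real.sqrt 6) (-2/Real.sqrt 6) (1/Real.sqrt 6)),
    (1/3 : ℂ) • (1 + pauliVec (1/Real.sqrt 6) (1/Real.sqrt 6) (-2/Real.sqrt 6))]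

lemma psd_aux (a b c : ℝ) (h : a^2+b^2+c^2 = 1) :
    ((1/3 : ℂ) • (1 + pauliVec a b c)).PosSemidef := by
  have hc : (a:ℂ)^2+(b:ℂ)^2+(c:ℂ)^2 = 1 := by exact_mod_cast h
  have hI := Complex.I_sq
  have e : (1/3 : ℂ) • (1 + pauliVec a b c) =
      (1/6 : ℝ) • ((1 + pauliVec a b c)ᴴ * (1 + pauliVec a b c)) := by
    ext i j
    fin_cases i <;> fin_cases j <;>
      simp [pauliVec, pauliX, pauliY, pauliZ, Matrix.mul_apply, Fin.sum_univ_two,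
        Matrix.one_apply, Complex.real_smul] <;> 
      grind
  rw [e]
  exact (posSemidef_conjTranspose_mul_self _).smul (by norm_num)

lemma tr_aux0 (a b c : ℝ) :
    (((1/3 : ℂ) • (1 + pauliVec a b c)) * omega6 0).trace = (((1 + a)/3 : ℝ) : ℂ) := by
  have hI := Complex.I_sq
  simp [omega6, pauliVec, pauliX, pauliY, pauliZ, Matrix.mul_apply, Fin.sum_univ_two,
    Matrix.one_apply, Matrix.trace]
  grind

lemma tr_aux1 (a b c : ℝ) :
    (((1/3 : ℂ) • (1 + pauliVec a b c)) * omega6 1).trace = (((1 + b)/3 : ℝ) : ℂ) := by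
  have hI := Complex.I_sq
  simp [omega6, pauliVec, pauliX, pauliY, pauliZ, Matrix.mul_apply, Fin.sum_univ_two,
    Matrix.one_apply, Matrix.trace]
  grind

lemma tr_aux2 (a b c : ℝ) :
    (((1/3 : ℂ) • (1 + pauliVec a b c)) * omega6 2).trace = (((1 + c)/3 : ℝ) : ℂ) := by
  have hI := Complex.I_sq
  simp [omega6, pauliVec, pauliX, pauliY, pauliZ, Matrix.mul_apply, Fin.sum_univ_two,
    Matrix.one_apply, Matrix.trace]
  grind

lemma tr_all (b m : Fin 3) : (Mpovm6 m * omega6 b).trace =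
    ((if m = b then 1/3 - 2/(3 * Real.sqrt 6) else 1/3 + 1/(3 * Real.sqrt 6) : ℝ) : ℂ) := by
  have h0 : Mpovm6 0 =
    (1/3 : ℂ) • (1 + pauliVec (-2/Real.sqrt 6) (1/Real.sqrt 6) (1/Real.sqrt 6)) := rfl
  have h1 : Mpovm6 1 =
    (1/3 : ℂ) • (1 + pauliVec (1/Real.sqrt 6) (-2/Real.sqrt 6) (1/Real.sqrt 6)) := rfl
  have h2 : Mpovm6 2 =
    (1/3 : ℂ) • (1 + pauliVec (1/Real.sqrt 6) (1/Real.sqrt 6) (-2/Real.sqrt 6)) := rfl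
  have hs : Real.sqrt 6 ≠ 0 := by positivity
  fin_cases b <;> fin_cases m <;>
    simp only [Fin.zero_eta, Fin.mk_one, Fin.reduceFinMk, h0, h1, h2,
      tr_aux0, tr_aux1, tr_aux2] <;>
    congr 1 <;> simp <;> field_simp <;> ring

/-- **Attack K1 on 6-state encoding, Shannon entropy.** The POVM
`M_b = (I + n_b·σ)/3` is a POVM with `tr(M_b ω_b) = 1/3 - 2/(3√6)` and
`tr(M_m ω_b) = 1/3 + 1/(3√6)` for `m ≠ b`, and the conditional Shannon entropy
of the uniform basis `B` given the outcome is
`h({1/3 + 1/(3√6), 1/3 + 1/(3√6), 1/3 - 2/(3√6)})`. -/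
theorem stmt17 :
    ((∀ b, (Mpovm6 b).PosSemidef) ∧ (∑ b, Mpovm6 b) = 1) ∧
    (∀ b : Fin 3, (Mpovm6 b * omega6 b).trace = ((1/3 - 2/(3 * Real.sqrt 6) : ℝ) : ℂ)) ∧
    (∀ b m : Fin 3, m ≠ b →
      (Mpovm6 m * omega6 b).trace = ((1/3 + 1/(3 * Real.sqrt 6) : ℝ) : ℂ)) ∧
    condEnt (fun b m : Fin 3 => ((Mpovm6 m * omega6 b).trace.re) / 3) =
      -2 * (1/3 + 1/(3 * Real.sqrt 6)) * Real.logb 2 (1/3 + 1/(3 * Real.sqrt 6))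
        - (1/3 - 2/(3 * Real.sqrt 6)) * Real.logb 2 (1/3 - 2/(3 * Real.sqrt 6)) := by
  have hs : Real.sqrt 6 ≠ 0 := by positivity
  have hsq : Real.sqrt 6 ^ 2 = 6 := Real.sq_sqrt (by norm_num)
  refine ⟨⟨?_, ?_⟩, ?_, ?_, ?_⟩
  · intro b
    fin_cases b <;> refine psd_aux _ _ _ ?_ <;> field_simp <;> rw [hsq] <;> norm_num
  · have hsc : ((Real.sqrt 6 : ℝ) : ℂ) ≠ 0 := by exact_mod_cast hs
    ext i j
    fin_cases i <;> fin_cases j <;>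
      simp [Mpovm6, Fin.sum_univ_three, pauliVec, pauliX, pauliY, pauliZ] <;>
      field_simp <;> ring
  · intro b
    rw [tr_all, if_pos rfl]
  · intro b m h
    rw [tr_all, if_neg h]
  · simp only [condEnt, tr_all, Complex.ofReal_re]
    have key : ∀ m : Fin 3, ∑ b : Fin 3, (if m = b then 1/3 - 2/(3 * Real.sqrt 6)
        else 1/3 + 1/(3 * Real.sqrt 6)) / 3 = 1/3 := by
      intro m
      fin_cases m <;> simp [Fin.sum_univ_three] <;> field_simp <;> ring
    have d : ∀ x : ℝ, x / 3 / (1/3) = x := by intro x; ring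
    simp only [key, d, one_div (ite _ _ _), Real.logb_inv]
    generalize 1/3 - 2/(3 * Real.sqrt 6) = p
    generalize 1/3 + 1/(3 * Real.sqrt 6) = q
    simp [Fin.sum_univ_three]
    ring
end
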